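/- arXiv:1705.00133 — 2 statements merged into one kernel-verified Lean document; each statement's English description precedes it below -/
import Mathlib

section
/- (Mapping lemma.) Let μ₁ ∈ SubDist(A₁), μ₂ ∈ SubDist(A₂), f₁ : A₁ → B₁, f₂ : A₂ → B₂, and R a relation on B₁ × B₂. Define S by a₁ S a₂ ⟺ f₁(a₁) R f₂(a₂). Then, for all X ⊆ B₁: pushforward f₁⋆μ₁ satisfies (f₁⋆μ₁)[X] ≤ e^ε (f₂⋆μ₂)[R(X)] + δ for all X if and only if μ₁[Y] ≤ e^ε μ₂[S(Y)] + δ for all Y ⊆ A₁. (No surjectivity assumption on f₁, f₂ is needed.) -/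
open scoped ENNReal

noncomputable section

def mass {A : Type*} (μ : A → ℝ≥0∞) (X : Set A) : ℝ≥0∞ := ∑' x : X, μ x

def SubDist {A : Type*} (μ : A → ℝ≥0∞) : Prop := mass μ Set.univ ≤ 1

def dpDiv {B : Type*} (ε : ℝ) (μ ν : B → ℝ≥0∞) : ℝ≥0∞ :=
  ⨆ E : Set B, (mass μ E - ENNReal.ofReal (Real.exp ε) * mass ν E)

def relImage {A B : Type*} (R : A → B → Prop) (X : Set A) : Set B :=
  {b | ∃ a ∈ X, R a b}

def extL {A B : Type*} (η : A × Option B → ℝ≥0∞) : Option A × Option B → ℝ≥0∞ :=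
  fun p => p.1.elim 0 (fun a => η (a, p.2))

def extR {A B : Type*} (η : Option A × B → ℝ≥0∞) : Option A × Option B → ℝ≥0∞ :=
  fun p => p.2.elim 0 (fun b => η (p.1, b))

/-- The conditions for a pair `(ηL, ηR)` to witness an `(ε,δ)`-approximate ⋆-lifting
of `μ₁` and `μ₂` for the relation `R`.  Here `⋆` is represented by `none`. -/
def IsStarWitness {A B : Type*} (ε δ : ℝ) (μ₁ : A → ℝ≥0∞) (μ₂ : B → ℝ≥0∞)
    (R : A → B → Prop) (ηL : A × Option B → ℝ≥0∞) (ηR : Option A × B → ℝ≥0∞) : Prop :=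
  SubDist ηL ∧ SubDist ηR ∧
  (∀ a, (∑' b : Option B, ηL (a, b)) = μ₁ a) ∧
  (∀ b, (∑' a : Option A, ηR (a, b)) = μ₂ b) ∧
  (∀ a b, ηL (a, some b) ≠ 0 → R a b) ∧
  (∀ a b, ηR (some a, b) ≠ 0 → R a b) ∧
  dpDiv ε (extL ηL) (extR ηR) ≤ ENNReal.ofReal δ

/-- Existence of an `(ε,δ)`-approximate ⋆-lifting. -/
def StarLift {A B : Type*} (ε δ : ℝ) (μ₁ : A → ℝ≥0∞) (μ₂ : B → ℝ≥0∞)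
    (R : A → B → Prop) : Prop :=
  ∃ ηL ηR, IsStarWitness ε δ μ₁ μ₂ R ηL ηR

/-- Pushforward of a sub-distribution along a map. -/
def push {A B : Type*} (f : A → B) (μ : A → ℝ≥0∞) : B → ℝ≥0∞ :=
  fun b => mass μ {a | f a = b}

/-! `S(Y) = f₂⁻¹(R(f₁(Y)))` and a pushforward gives `X` the mass of its preimage, so both conditions
compare masses on `A₁` and `A₂`. A set `Y` is tested through `X = f₁(Y)`, because `Y ⊆ f₁⁻¹(f₁(Y))`,
and a set `X` through `Y = f₁⁻¹(X)`, because `f₁(f₁⁻¹(X)) ⊆ X`. -/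

theorem mass_mono {A : Type*} (μ : A → ℝ≥0∞) : Monotone (mass μ) :=
  fun _ _ h => ENNReal.tsum_mono_subtype μ h

theorem mass_push {A B : Type*} (f : A → B) (μ : A → ℝ≥0∞) (X : Set B) :
    mass (push f μ) X = mass μ (f ⁻¹' X) :=
  calc mass (push f μ) X = mass μ (⋃ b ∈ X, f ⁻¹' {b}) :=
        (ENNReal.tsum_biUnion' (Set.pairwiseDisjoint_fiber f X)).symm
    _ = mass μ (f ⁻¹' X) := by rw [Set.biUnion_preimage_singleton]

theorem relImage_mono {A B : Type*} (R : A → B → Prop) : Monotone (relImage R) :=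
  fun _ _ h _ ⟨a, ha, hab⟩ => ⟨a, h ha, hab⟩

theorem preimage_relImage_image {A₁ A₂ B₁ B₂ : Type*} (f₁ : A₁ → B₁) (f₂ : A₂ → B₂)
    (R : B₁ → B₂ → Prop) (Y : Set A₁) :
    f₂ ⁻¹' relImage R (f₁ '' Y) = relImage (fun a₁ a₂ => R (f₁ a₁) (f₂ a₂)) Y :=
  Set.ext fun _ => Set.exists_mem_image

theorem mapping_lemma_general {A₁ A₂ B₁ B₂ : Type*}
    (μ₁ : A₁ → ℝ≥0∞) (μ₂ : A₂ → ℝ≥0∞) (f₁ : A₁ → B₁) (f₂ : A₂ → B₂) (R : B₁ → B₂ → Prop)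
    {φ : ℝ≥0∞ → ℝ≥0∞} (hφ : Monotone φ) :
    (∀ X : Set B₁, mass (push f₁ μ₁) X ≤ φ (mass (push f₂ μ₂) (relImage R X)))
    ↔ (∀ Y : Set A₁,
        mass μ₁ Y ≤ φ (mass μ₂ (relImage (fun a₁ a₂ => R (f₁ a₁) (f₂ a₂)) Y))) := by
  simp only [mass_push, ← preimage_relImage_image]
  constructor
  · intro h Y
    calc mass μ₁ Y ≤ mass μ₁ (f₁ ⁻¹' (f₁ '' Y)) := mass_mono μ₁ (Set.subset_preimage_image f₁ Y)
      _ ≤ φ (mass μ₂ (f₂ ⁻¹' relImage R (f₁ '' Y))) := h (f₁ '' Y)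
  · intro h X
    have hX : relImage R (f₁ '' (f₁ ⁻¹' X)) ⊆ relImage R X :=
      relImage_mono R (Set.image_preimage_subset f₁ X)
    calc mass μ₁ (f₁ ⁻¹' X) ≤ φ (mass μ₂ (f₂ ⁻¹' relImage R (f₁ '' (f₁ ⁻¹' X)))) := h (f₁ ⁻¹' X)
      _ ≤ φ (mass μ₂ (f₂ ⁻¹' relImage R X)) := hφ (mass_mono μ₂ (Set.preimage_mono hX))

theorem mapping_lemma {A₁ A₂ B₁ B₂ : Type*}
    (μ₁ : A₁ → ℝ≥0∞) (μ₂ : A₂ → ℝ≥0∞) (h₁ : SubDist μ₁) (h₂ : SubDist μ₂)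
    (f₁ : A₁ → B₁) (f₂ : A₂ → B₂) (R : B₁ → B₂ → Prop)
    (ε δ : ℝ) (hε : 0 ≤ ε) (hδ : 0 ≤ δ) :
    (∀ X : Set B₁,
        mass (push f₁ μ₁) X
          ≤ ENNReal.ofReal (Real.exp ε) * mass (push f₂ μ₂) (relImage R X)
            + ENNReal.ofReal δ)
    ↔ (∀ Y : Set A₁,
        mass μ₁ Y
          ≤ ENNReal.ofReal (Real.exp ε)
              * mass μ₂ (relImage (fun a₁ a₂ => R (f₁ a₁) (f₂ a₂)) Y)
            + ENNReal.ofReal δ) :=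
  mapping_lemma_general μ₁ μ₂ f₁ f₂ R (mul_right_mono.add_const (ENNReal.ofReal δ))
end
end

section
/- (One-sided conjunction with events.) Let μ₁ ∈ SubDist(A), μ₂ ∈ SubDist(B), θ_a ⊆ A, R ⊆ A × B. If for all X ⊆ A, μ₁[X] ≤ e^ε μ₂[R(X)] + δ, then for all X ⊆ A, μ₁[X] ≤ e^ε μ₂[(θ_{a,◁} ∩ R)(X)] + δ + μ₁[A∖θ_a], where θ_{a,◁} ∩ R = {(a,b) ∈ R : a ∈ θ_a}. -/
open scoped ENNReal

noncomputable section

/-!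
Split `X` along `θ`. The part of `X` outside `θ` has mass at most `mass μ₁ θᶜ`; on the part inside,
a relation `S` and its weakening `θ ⟹ S` have the same image, so a bound for `θ ⟹ S` transfers
to `S` up to that mass (the left up-to-bad principle). For `S = θ ∩ R` the weakening
`θ ⟹ θ ∩ R` contains `R`, so a bound for `R` is already a bound for it.
-/

section UpToBad

variable {A B : Type*}

@[gcongr]
theorem mass_mono_s18 (μ : A → ℝ≥0∞) {X Y : Set A} (hXY : X ⊆ Y) : mass μ X ≤ mass μ Y :=
  ENNReal.tsum_mono_subtype μ hXY

theorem mass_le_mass_inter_add_mass_compl (μ : A → ℝ≥0∞) (X Y : Set A) :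
    mass μ X ≤ mass μ (X ∩ Y) + mass μ Yᶜ :=
  calc mass μ X = mass μ (X ∩ Y ∪ X ∩ Yᶜ) := by rw [Set.inter_union_compl]
    _ ≤ mass μ (X ∩ Y) + mass μ (X ∩ Yᶜ) := ENNReal.tsum_union_le μ _ _
    _ ≤ mass μ (X ∩ Y) + mass μ Yᶜ := by
        gcongr
        exact Set.inter_subset_right

theorem relImage_mono_s18 {R S : A → B → Prop} (hRS : ∀ a b, R a b → S a b) (X : Set A) :
    relImage R X ⊆ relImage S X :=
  fun _ ⟨a, ha, hab⟩ => ⟨a, ha, hRS a _ hab⟩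

theorem relImage_imp_inter_subset (θ : Set A) (R : A → B → Prop) (X : Set A) :
    relImage (fun a b => a ∈ θ → R a b) (X ∩ θ) ⊆ relImage R X :=
  fun _ ⟨a, ⟨haX, haθ⟩, hab⟩ => ⟨a, haX, hab haθ⟩

variable {μ₁ : A → ℝ≥0∞} {μ₂ : B → ℝ≥0∞} {θ : Set A} {R : A → B → Prop} {c d : ℝ≥0∞}

theorem mass_le_of_up_to_bad_left
    (h : ∀ X, mass μ₁ X ≤ c * mass μ₂ (relImage (fun a b => a ∈ θ → R a b) X) + d) (X : Set A) :
    mass μ₁ X ≤ c * mass μ₂ (relImage R X) + d + mass μ₁ θᶜ :=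
  calc mass μ₁ X ≤ mass μ₁ (X ∩ θ) + mass μ₁ θᶜ := mass_le_mass_inter_add_mass_compl μ₁ X θ
    _ ≤ c * mass μ₂ (relImage (fun a b => a ∈ θ → R a b) (X ∩ θ)) + d + mass μ₁ θᶜ := by
        gcongr
        exact h (X ∩ θ)
    _ ≤ c * mass μ₂ (relImage R X) + d + mass μ₁ θᶜ := by
        gcongr
        exact relImage_imp_inter_subset θ R X

theorem one_sided_conjunction_general
    (h : ∀ X, mass μ₁ X ≤ c * mass μ₂ (relImage R X) + d) (X : Set A) :
    mass μ₁ X ≤ c * mass μ₂ (relImage (fun a b => a ∈ θ ∧ R a b) X) + d + mass μ₁ θᶜ := by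
  refine mass_le_of_up_to_bad_left (fun Y => (h Y).trans ?_) X
  gcongr
  exact relImage_mono_s18 (fun _ _ hab haθ => ⟨haθ, hab⟩) Y

end UpToBad

theorem one_sided_conjunction {A B : Type*} [Countable A] [Countable B]
    (μ₁ : A → ℝ≥0∞) (μ₂ : B → ℝ≥0∞) (h₁ : SubDist μ₁) (h₂ : SubDist μ₂)
    (θa : Set A) (R : A → B → Prop) (ε δ : ℝ) (hε : 0 ≤ ε) (hδ : 0 ≤ δ)
    (h : ∀ X : Set A,
      mass μ₁ X ≤ ENNReal.ofReal (Real.exp ε) * mass μ₂ (relImage R X) + ENNReal.ofReal δ) :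
    ∀ X : Set A,
      mass μ₁ X ≤ ENNReal.ofReal (Real.exp ε)
          * mass μ₂ (relImage (fun a b => a ∈ θa ∧ R a b) X)
        + ENNReal.ofReal δ + mass μ₁ θaᶜ :=
  one_sided_conjunction_general h
end
end
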